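/- Let d be a positive natural number and let G be a subgroup of the group of invertible d×d real matrices such that the corresponding set of matrices { (g : Matrix (Fin d) (Fin d) ℝ) | g ∈ G } is compact. Then there exist a positive natural number n, weights p : Fin n → ℝ with p i ≥ 0 for all i and Σ_i p i = 1 and p 0 > 0, and elements g : Fin n → G with g 0 = 1, such that the matrix T := Σ_i p i • (g i : Matrix (Fin d) (Fin d) ℝ) satisfies (u : Matrix (Fin d) (Fin d) ℝ) * T = T for every u ∈ G. -/

import Mathlib

section helper
open MeasureTheory
theorem isCompact_hull_aux {E : Type*} [NormedAddCommGroup E] [NormedSpace ℝ E]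
    [FiniteDimensional ℝ E] {s : Set E} (hs : IsCompact s) : IsCompact (convexHull ℝ s) := by
  let N := Module.finrank ℝ E + 2
  have hEq : convexHull ℝ s = ⋃ k : Fin N,
      (fun q : (Fin k → ℝ) × (Fin k → E) => ∑ i, q.1 i • q.2 i) ''
        (stdSimplex ℝ (Fin k) ×ˢ Set.pi Set.univ (fun _ => s)) := by
    ext x
    simp only [Set.mem_iUnion, Set.mem_image, Set.mem_prod, Set.mem_univ_pi, Prod.exists]
    constructor
    · intro hx
      obtain ⟨ι, _, z, w, hz, hai, hw, hw1, hsum⟩ := eq_pos_convex_span_of_mem_convexHull hx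
      have hc : Fintype.card ι ≤ Module.finrank ℝ E + 1 :=
        hai.card_le_finrank_succ.trans (Nat.succ_le_succ (Submodule.finrank_le _))
      let e := (Fintype.equivFin ι).symm
      refine ⟨⟨Fintype.card ι, by omega⟩, fun i => w (e i), fun i => z (e i),
        ⟨⟨fun i => (hw _).le, ?_⟩, fun i => hz ⟨_, rfl⟩⟩, ?_⟩
      · exact (Equiv.sum_comp e w).trans hw1
      · exact (Equiv.sum_comp e (fun j => w j • z j)).trans hsum
    · rintro ⟨k, w, z, ⟨hw, hz⟩, rfl⟩
      exact (convex_convexHull ℝ s).sum_mem (fun i _ => hw.1 i) hw.2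
        (fun i _ => subset_convexHull ℝ s (hz i))
  rw [hEq]
  refine isCompact_iUnion fun k => ?_
  refine ((isCompact_stdSimplex ℝ (Fin k)).prod (isCompact_univ_pi fun _ => hs)).image ?_
  fun_prop

theorem twirl_aux_general {A : Type*} [NormedRing A] [NormedAlgebra ℝ A] [FiniteDimensional ℝ A]
    (G : Subgroup Aˣ)
    (hcompact : IsCompact ((fun u : Aˣ => (u : A)) '' (G : Set Aˣ))) :
    ∃ T ∈ convexHull ℝ ((fun u : Aˣ => (u : A)) '' (G : Set Aˣ)),
      ∀ u ∈ G, (u : A) * T = T := by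
  have : CompleteSpace A := FiniteDimensional.complete ℝ _
  have : ProperSpace A := FiniteDimensional.proper ℝ _
  have hemb := (Units.isOpenEmbedding_val (R := A)).isEmbedding
  have hG : IsCompact (G : Set Aˣ) := hemb.isCompact_iff.2 hcompact
  have : CompactSpace G := isCompact_iff_compactSpace.1 hG
  let : MeasurableSpace G := borel G
  have : BorelSpace G := ⟨rfl⟩
  let μ : Measure G := Measure.haarMeasure ⊤
  have : IsProbabilityMeasure μ := ⟨by
    have := Measure.haarMeasure_self (K₀ := (⊤ : TopologicalSpace.PositiveCompacts G))
    simpa using this⟩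
  let f : G → A := fun g => ((g : Aˣ) : A)
  have hf : Continuous f := Units.continuous_val.comp continuous_subtype_val
  have hint : Integrable f μ := hf.integrable_of_hasCompactSupport (HasCompactSupport.of_compactSpace f)
  refine ⟨∫ g, f g ∂μ, ?_, ?_⟩
  · refine (convex_convexHull ℝ _).integral_mem (isCompact_hull_aux hcompact).isClosed ?_ hint
    exact Filter.Eventually.of_forall fun g => subset_convexHull ℝ _ ⟨g, g.2, rfl⟩
  · intro u hu
    have h1 := (ContinuousLinearMap.mul ℝ A (u : A)).integral_comp_comm hint
    simp only [ContinuousLinearMap.mul_apply'] at h1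
    rw [← h1]
    exact integral_mul_left_eq_self (μ := μ) f ⟨u, hu⟩

attribute [local instance] Matrix.linftyOpNormedRing Matrix.linftyOpNormedAlgebra in
theorem twirl_aux (d : ℕ)
    (G : Subgroup (Matrix (Fin d) (Fin d) ℝ)ˣ)
    (hcompact : IsCompact
      ((fun u : (Matrix (Fin d) (Fin d) ℝ)ˣ => (u : Matrix (Fin d) (Fin d) ℝ)) ''
        (G : Set (Matrix (Fin d) (Fin d) ℝ)ˣ))) :
    ∃ T ∈ convexHull ℝ ((fun u : (Matrix (Fin d) (Fin d) ℝ)ˣ => (u : Matrix (Fin d) (Fin d) ℝ)) ''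
        (G : Set (Matrix (Fin d) (Fin d) ℝ)ˣ)),
      ∀ u ∈ G, (u : Matrix (Fin d) (Fin d) ℝ) * T = T := by
  exact twirl_aux_general G hcompact
end helper

/-- Existence of a twirling test: for a compact group `G` of invertible real matrices
there exists a finite convex combination `T = Σᵢ pᵢ gᵢ` of elements of `G`, with the
identity among the `gᵢ` (with strictly positive weight), such that `u * T = T` for
every `u ∈ G`. -/
theorem exists_twirling_test
    (d : ℕ) (hd : 0 < d)
    (G : Subgroup (Matrix (Fin d) (Fin d) ℝ)ˣ)
    (hcompact : IsCompact
      ((fun u : (Matrix (Fin d) (Fin d) ℝ)ˣ => (u : Matrix (Fin d) (Fin d) ℝ)) ''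
        (G : Set (Matrix (Fin d) (Fin d) ℝ)ˣ))) :
    ∃ (n : ℕ) (hn : 0 < n) (p : Fin n → ℝ) (g : Fin n → G),
      (∀ i, 0 ≤ p i) ∧ (∑ i, p i = 1) ∧ 0 < p ⟨0, hn⟩ ∧ g ⟨0, hn⟩ = 1 ∧
      ∀ u ∈ G,
        (u : Matrix (Fin d) (Fin d) ℝ) *
            (∑ i, p i • (((g i : (Matrix (Fin d) (Fin d) ℝ)ˣ)) : Matrix (Fin d) (Fin d) ℝ)) =
          ∑ i, p i • (((g i : (Matrix (Fin d) (Fin d) ℝ)ˣ)) : Matrix (Fin d) (Fin d) ℝ) := by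
  classical
  obtain ⟨T, hT, hinv⟩ := twirl_aux d G hcompact
  obtain ⟨ι, _, w, z, hw0, hw1, hz, hsum⟩ := mem_convexHull_iff_exists_fintype.1 hT
  choose h hh hhz using hz
  have hpos : ∃ i, 0 < w i := by
    by_contra! hc
    have : ∑ i, w i ≤ 0 := Finset.sum_nonpos fun i _ => hc i
    linarith
  obtain ⟨i0, hi0⟩ := hpos
  have hn : 0 < Fintype.card ι := Fintype.card_pos_iff.2 ⟨i0⟩
  let e0 := Fintype.equivFin ι
  let e : Fin (Fintype.card ι) ≃ ι := e0.symm.trans (Equiv.swap (e0.symm ⟨0, hn⟩) i0)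
  have he : e ⟨0, hn⟩ = i0 := by simp [e]
  have key : ∑ i, w (e i) • ((((h i0)⁻¹ * h (e i) : (Matrix (Fin d) (Fin d) ℝ)ˣ)) :
      Matrix (Fin d) (Fin d) ℝ) = T := by
    rw [Equiv.sum_comp e (fun j => w j • ((((h i0)⁻¹ * h j : (Matrix (Fin d) (Fin d) ℝ)ˣ)) :
      Matrix (Fin d) (Fin d) ℝ))]
    rw [← hinv _ (G.inv_mem (hh i0))]
    conv_rhs => rw [← hsum]
    rw [Finset.mul_sum]
    refine Finset.sum_congr rfl fun j _ => ?_
    rw [← hhz j, Units.val_mul, mul_smul_comm]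
  refine ⟨Fintype.card ι, hn, fun i => w (e i),
    fun i => ⟨(h i0)⁻¹ * h (e i), G.mul_mem (G.inv_mem (hh i0)) (hh _)⟩,
    fun i => hw0 _, ?_, ?_, ?_, ?_⟩
  · rw [Equiv.sum_comp e w, hw1]
  · simpa [he] using hi0
  · ext1
    simp [he]
  · intro u hu
    simp only [key]
    exact hinv u hu
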